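/- arXiv:1801.07196 — 5 statements merged into one kernel-verified Lean document; each statement's English description precedes it below -/
import Mathlib

section
/- Let γ : I → ℝ² be a three times continuously differentiable unit-speed curve on an open interval I satisfying ⟨γ(s), γ''(s)⟩ = -1 for all s ∈ I, and let κ(s) = det(γ'(s), γ''(s)) denote its signed curvature. Then κ(s) ≠ 0 for every s ∈ I, and ⟨γ'(s), γ(s)⟩ = -κ'(s)/κ(s)³ for all s ∈ I. -/
/-!
Write `T = γ'`, and let `N` be the leftward normal. Unit speed gives `γ'' = κ N`, so
`⟨γ, γ''⟩ = -1` reads `κ ⟨γ, N⟩ = -1`; in particular `κ ≠ 0`. Differentiating `⟨γ, γ''⟩ = -1`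
and using `⟨γ', γ''⟩ = 0` gives `⟨γ, γ'''⟩ = 0`. Since `γ''' = -κ² T + κ' N`, this is
`κ² ⟨γ, T⟩ = κ' ⟨γ, N⟩ = -κ' / κ`. The argument is carried out in coordinates; the algebra is
`curvature_identity`.
-/

open scoped RealInnerProductSpace

lemma hasDerivAt_coord {f : ℝ → EuclideanSpace ℝ (Fin 2)} {s : ℝ}
    (h : DifferentiableAt ℝ f s) (i : Fin 2) :
    HasDerivAt (fun t => f t i) (deriv f s i) s :=
  (EuclideanSpace.proj (𝕜 := ℝ) i).hasFDerivAt.comp_hasDerivAt s h.hasDerivAt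

/-- The pointwise identity: `(x, y)`, `(a, b)`, `(p, q)`, `(u, v)` stand for the position and
its first three derivatives, and `av - bu` for the derivative of the curvature `aq - bp`. -/
lemma curvature_identity {x y a b p q u v : ℝ} (h1 : a * a + b * b = 1)
    (h2 : a * p + b * q = 0) (h3 : x * p + y * q = -1)
    (h4 : p * p + q * q + (a * u + b * v) = 0) (h5 : x * u + y * v = 0) :
    a * q - b * p ≠ 0 ∧ a * x + b * y = -((a * v - b * u) / (a * q - b * p) ^ 3) := by
  obtain ⟨k, hk⟩ : ∃ k, k = a * q - b * p := ⟨_, rfl⟩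
  obtain ⟨l, hl⟩ : ∃ l, l = a * v - b * u := ⟨_, rfl⟩
  rw [← hk, ← hl]
  have hp : p = -b * k := by rw [hk]; linear_combination (-p) * h1 + a * h2
  have hq : q = a * k := by rw [hk]; linear_combination (-q) * h1 + b * h2
  have hn : k * (a * y - b * x) = -1 := by
    rw [hp, hq] at h3
    linear_combination h3
  have hk0 : k ≠ 0 := by
    rintro rfl
    simp at hn
  have hm : a * u + b * v = -k ^ 2 := by
    have : p * p + q * q = k ^ 2 := by rw [hp, hq]; linear_combination k ^ 2 * h1
    linarith
  -- The decomposition of the third derivative in the frame `T = (a, b)`, `N = (-b, a)`.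
  have hu : u = -k ^ 2 * a - l * b := by rw [hl, ← hm]; linear_combination (-u) * h1
  have hv : v = -k ^ 2 * b + l * a := by rw [hl, ← hm]; linear_combination (-v) * h1
  refine ⟨hk0, ?_⟩
  have h6 : k ^ 3 * (a * x + b * y) = -l := by
    rw [hu, hv] at h5
    linear_combination (-k) * h5 + l * hn
  field_simp
  linarith

/-- For a C³ unit-speed planar curve `γ` on an open interval `I` with `⟨γ, γ''⟩ ≡ -1`,
the signed curvature `κ = det(γ', γ'')` is nowhere zero on `I` and
`⟨γ'(s), γ(s)⟩ = -κ'(s)/κ(s)³` on `I`. -/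
theorem stmt4 (I : Set ℝ) (hI : IsOpen I) (hI' : I.OrdConnected)
    (γ : ℝ → EuclideanSpace ℝ (Fin 2)) (hγ : ContDiffOn ℝ 3 γ I)
    (hunit : ∀ s ∈ I, ‖deriv γ s‖ = 1)
    (hinc : ∀ s ∈ I, ⟪γ s, deriv (deriv γ) s⟫ = -1)
    (κ : ℝ → ℝ)
    (hκ : ∀ s : ℝ, κ s =
      Matrix.det !![deriv γ s 0, deriv (deriv γ) s 0;
                    deriv γ s 1, deriv (deriv γ) s 1]) :
    ∀ s ∈ I, κ s ≠ 0 ∧ ⟪deriv γ s, γ s⟫ = -(deriv κ s / κ s ^ 3) := by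
  intro s hs
  have hg1 : ContDiffOn ℝ 2 (deriv γ) I := hγ.deriv_of_isOpen hI (by norm_num)
  have hg2 : ContDiffOn ℝ 1 (deriv (deriv γ)) I := hg1.deriv_of_isOpen hI (by norm_num)
  have hnhds : I ∈ nhds s := hI.mem_nhds hs
  have d0 := fun t (ht : t ∈ I) => hasDerivAt_coord
    ((hγ.differentiableOn (by norm_num)).differentiableAt (hI.mem_nhds ht))
  have d1 := fun t (ht : t ∈ I) => hasDerivAt_coord
    ((hg1.differentiableOn (by norm_num)).differentiableAt (hI.mem_nhds ht))
  have d2 := hasDerivAt_coord ((hg2.differentiableOn (by norm_num)).differentiableAt hnhds)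
  have const_deriv : ∀ {f : ℝ → ℝ} {f' c t : ℝ}, t ∈ I → (∀ r ∈ I, f r = c) →
      HasDerivAt f f' t → f' = 0 := by
    intro f f' c t ht hc hf
    refine hf.unique ((hasDerivAt_const t c).congr_of_eventuallyEq ?_)
    filter_upwards [hI.mem_nhds ht] with r hr using hc r hr
  have e1 : ∀ t ∈ I, deriv γ t 0 * deriv γ t 0 + deriv γ t 1 * deriv γ t 1 = 1 := by
    intro t ht
    have h := real_inner_self_eq_norm_sq (deriv γ t)
    rw [hunit t ht] at h
    simp only [PiLp.inner_apply, Fin.sum_univ_two, RCLike.inner_apply, conj_trivial] at h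
    linarith
  have e2 : ∀ t ∈ I, deriv γ t 0 * deriv (deriv γ) t 0
      + deriv γ t 1 * deriv (deriv γ) t 1 = 0 := by
    intro t ht
    have h := const_deriv ht e1 (((d1 t ht 0).mul (d1 t ht 0)).add ((d1 t ht 1).mul (d1 t ht 1)))
    linarith
  have e3 : ∀ t ∈ I, γ t 0 * deriv (deriv γ) t 0 + γ t 1 * deriv (deriv γ) t 1 = -1 := by
    intro t ht
    have h := hinc t ht
    simp only [PiLp.inner_apply, Fin.sum_univ_two, RCLike.inner_apply, conj_trivial] at h
    linarith
  have e4 := const_deriv hs e2 (((d1 s hs 0).mul (d2 0)).add ((d1 s hs 1).mul (d2 1)))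
  have e5 := const_deriv hs e3 (((d0 s hs 0).mul (d2 0)).add ((d0 s hs 1).mul (d2 1)))
  have hκ' : κ = fun t => deriv γ t 0 * deriv (deriv γ) t 1
      - deriv γ t 1 * deriv (deriv γ) t 0 := by
    funext t
    rw [hκ, Matrix.det_fin_two_of]
    ring
  have dκ : deriv κ s = deriv γ s 0 * deriv (deriv (deriv γ)) s 1
      - deriv γ s 1 * deriv (deriv (deriv γ)) s 0 := by
    rw [hκ']
    refine (((d1 s hs 0).mul (d2 1)).sub ((d1 s hs 1).mul (d2 0))).deriv.trans ?_
    ring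
  have key := curvature_identity (e1 s hs) (e2 s hs) (e3 s hs)
    (u := deriv (deriv (deriv γ)) s 0) (v := deriv (deriv (deriv γ)) s 1)
    (by linarith) (by linarith [e2 s hs])
  have hin : ⟪deriv γ s, γ s⟫ = deriv γ s 0 * γ s 0 + deriv γ s 1 * γ s 1 := by
    simp only [PiLp.inner_apply, Fin.sum_univ_two, RCLike.inner_apply, conj_trivial]
    ring
  rw [hin, dκ, hκ']
  exact key
end

section
/- Let n ≥ 2 be an integer and let γ : I → ℝ² be a four times continuously differentiable unit-speed curve on an open interval I satisfying ⟨γ(s), γ''(s)⟩ = -n for all s ∈ I, and let κ(s) = det(γ'(s), γ''(s)) be its signed curvature. Then κ(s) ≠ 0 for every s ∈ I, and n (κ(s) κ''(s) - 3 κ'(s)²) = (n-1) κ(s)⁴ for all s ∈ I. -/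
open scoped RealInnerProductSpace

/-!
Write `T = γ'`, `N = JT` for the rotated tangent, `τ = ⟨γ, T⟩` and `ν = ⟨γ, N⟩`. The Frenet
equations `T' = κ N`, `N' = -κ T` turn the incompressibility condition into `κ ν = -n`, so
`κ ≠ 0`, and give `ν' = -κ τ` and `τ' = 1 - n`. Differentiating `κ ν = -n` and multiplying by `κ`
yields `-n κ' = κ³ τ`; differentiating once more and multiplying by `κ` yields the ODE.
`planar_curvature_ode` carries this out in coordinates `x, y` for `γ` and `a, b` for `T`.
-/

/-- The coordinate form of the result: `(x, y)` is the curve, `(a, b)` its velocity, `(a', b')` its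
acceleration. Only differentiability of `κ` is assumed; that `κ'` is differentiable follows from
`-n κ' = κ³ τ`. -/
lemma planar_curvature_ode (n : ℝ) (hn : n ≠ 0) (I : Set ℝ) (hI : IsOpen I)
    (x y a b a' b' κ : ℝ → ℝ)
    (hx : ∀ s ∈ I, HasDerivAt x (a s) s) (hy : ∀ s ∈ I, HasDerivAt y (b s) s)
    (ha : ∀ s ∈ I, HasDerivAt a (a' s) s) (hb : ∀ s ∈ I, HasDerivAt b (b' s) s)
    (hdκ : ∀ s ∈ I, DifferentiableAt ℝ κ s)
    (hunit : ∀ s ∈ I, a s ^ 2 + b s ^ 2 = 1)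
    (hinc : ∀ s ∈ I, x s * a' s + y s * b' s = -n)
    (hκ : ∀ s, κ s = a s * b' s - a' s * b s) :
    ∀ s ∈ I, κ s ≠ 0 ∧
      n * (κ s * deriv (deriv κ) s - 3 * deriv κ s ^ 2) = (n - 1) * κ s ^ 4 := by
  have horth : ∀ s ∈ I, a s * a' s + b s * b' s = 0 := by
    intro s hs
    have h1 := ((ha s hs).pow 2).add ((hb s hs).pow 2)
    have h2 : (a ^ 2 + b ^ 2) =ᶠ[nhds s] fun _ => (1 : ℝ) := by
      filter_upwards [hI.mem_nhds hs] with t ht using hunit t ht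
    have h3 := h1.unique ((hasDerivAt_const s (1 : ℝ)).congr_of_eventuallyEq h2)
    norm_num at h3
    linarith
  -- Frenet equations in coordinates
  have hfa : ∀ s ∈ I, a' s = -κ s * b s := fun s hs => by
    rw [hκ]
    linear_combination (-a' s) * hunit s hs + a s * horth s hs
  have hfb : ∀ s ∈ I, b' s = κ s * a s := fun s hs => by
    rw [hκ]
    linear_combination (-b' s) * hunit s hs + b s * horth s hs
  have hν : ∀ s ∈ I, κ s * (y s * a s - x s * b s) = -n := fun s hs => by
    rw [← hinc s hs, hfa s hs, hfb s hs]
    ring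
  have hne : ∀ s ∈ I, κ s ≠ 0 := fun s hs h0 => by
    have h := hν s hs
    rw [h0, zero_mul] at h
    exact hn (by linarith)
  have hfirst : ∀ s ∈ I, -n * deriv κ s = κ s ^ 3 * (x s * a s + y s * b s) := by
    intro s hs
    have h1 := (hdκ s hs).hasDerivAt.mul
      (((hy s hs).mul (ha s hs)).sub ((hx s hs).mul (hb s hs)))
    have h2 : (κ * (y * a - x * b)) =ᶠ[nhds s] fun _ => -n := by
      filter_upwards [hI.mem_nhds hs] with t ht using hν t ht
    have h3 := h1.unique ((hasDerivAt_const s (-n)).congr_of_eventuallyEq h2)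
    simp only [Pi.mul_apply, Pi.sub_apply] at h3
    rw [hfa s hs, hfb s hs] at h3
    linear_combination κ s * h3 - deriv κ s * hν s hs
  intro s hs
  refine ⟨hne s hs, ?_⟩
  have h1 := ((hdκ s hs).hasDerivAt.pow 3).mul
      (((hx s hs).mul (ha s hs)).add ((hy s hs).mul (hb s hs)))
  have h2 : deriv κ =ᶠ[nhds s] fun t => (-n)⁻¹ * (κ ^ 3 * (x * a + y * b)) t := by
    filter_upwards [hI.mem_nhds hs] with t ht
    have h := hfirst t ht
    simp only [Pi.mul_apply, Pi.add_apply, Pi.pow_apply]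
    rw [← h, inv_mul_cancel_left₀ (neg_ne_zero.mpr hn)]
  have h3 := ((h1.const_mul (-n)⁻¹).congr_of_eventuallyEq h2).deriv
  have h4 : -n * deriv (deriv κ) s = 3 * κ s ^ 2 * deriv κ s * (x s * a s + y s * b s) +
      κ s ^ 3 * (a s * a s + x s * a' s + (b s * b s + y s * b' s)) := by
    rw [h3, mul_inv_cancel_left₀ (neg_ne_zero.mpr hn)]
    norm_num
  have h5 := hinc s hs
  linear_combination (-κ s) * h4 + 3 * deriv κ s * hfirst s hs - κ s ^ 4 * h5
    - κ s ^ 4 * hunit s hs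

/-- For a C⁴ unit-speed planar curve `γ` on an open interval `I` with `⟨γ, γ''⟩ ≡ -n`
(`n ≥ 2`), the signed curvature `κ = det(γ', γ'')` is nowhere zero on `I` and satisfies
the ODE `n(κκ'' - 3κ'²) = (n-1)κ⁴` on `I`. -/
theorem stmt9 (n : ℕ) (hn : 2 ≤ n) (I : Set ℝ) (hI : IsOpen I) (hI' : I.OrdConnected)
    (γ : ℝ → EuclideanSpace ℝ (Fin 2)) (hγ : ContDiffOn ℝ 4 γ I)
    (hunit : ∀ s ∈ I, ‖deriv γ s‖ = 1)
    (hinc : ∀ s ∈ I, ⟪γ s, deriv (deriv γ) s⟫ = -(n : ℝ))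
    (κ : ℝ → ℝ)
    (hκ : ∀ s : ℝ, κ s =
      Matrix.det !![deriv γ s 0, deriv (deriv γ) s 0;
                    deriv γ s 1, deriv (deriv γ) s 1]) :
    ∀ s ∈ I, κ s ≠ 0 ∧
      (n : ℝ) * (κ s * deriv (deriv κ) s - 3 * deriv κ s ^ 2) = ((n : ℝ) - 1) * κ s ^ 4 := by
  have hd1 : ContDiffOn ℝ 3 (deriv γ) I := hγ.deriv_of_isOpen hI (by norm_num)
  have hd2 : ContDiffOn ℝ 2 (deriv (deriv γ)) I := hd1.deriv_of_isOpen hI (by norm_num)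
  have hD0 : ∀ s ∈ I, HasDerivAt γ (deriv γ s) s := fun s hs =>
    ((hγ.differentiableOn (by norm_num)).differentiableAt (hI.mem_nhds hs)).hasDerivAt
  have hD1 : ∀ s ∈ I, HasDerivAt (deriv γ) (deriv (deriv γ) s) s := fun s hs =>
    ((hd1.differentiableOn (by norm_num)).differentiableAt (hI.mem_nhds hs)).hasDerivAt
  have hD2 : ∀ s ∈ I, HasDerivAt (deriv (deriv γ)) (deriv (deriv (deriv γ)) s) s := fun s hs =>
    ((hd2.differentiableOn (by norm_num)).differentiableAt (hI.mem_nhds hs)).hasDerivAt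
  have hcoord : ∀ (i : Fin 2) (f : ℝ → EuclideanSpace ℝ (Fin 2)) (v : EuclideanSpace ℝ (Fin 2))
      (s : ℝ), HasDerivAt f v s → HasDerivAt (fun t => f t i) (v i) s := fun i f v s h =>
    (EuclideanSpace.proj (𝕜 := ℝ) i).hasFDerivAt.comp_hasDerivAt s h
  have hκ' : ∀ s, κ s = deriv γ s 0 * deriv (deriv γ) s 1 - deriv (deriv γ) s 0 * deriv γ s 1 :=
    fun s => by rw [hκ, Matrix.det_fin_two_of]
  refine planar_curvature_ode n (by positivity) I hI (fun s => γ s 0) (fun s => γ s 1)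
    (fun s => deriv γ s 0) (fun s => deriv γ s 1)
    (fun s => deriv (deriv γ) s 0) (fun s => deriv (deriv γ) s 1) κ
    (fun s hs => hcoord 0 _ _ s (hD0 s hs)) (fun s hs => hcoord 1 _ _ s (hD0 s hs))
    (fun s hs => hcoord 0 _ _ s (hD1 s hs)) (fun s hs => hcoord 1 _ _ s (hD1 s hs))
    (fun s hs => ?_) (fun s hs => ?_) (fun s hs => ?_) hκ'
  · rw [funext hκ']
    exact (((hcoord 0 _ _ s (hD1 s hs)).mul (hcoord 1 _ _ s (hD2 s hs))).sub
      ((hcoord 0 _ _ s (hD2 s hs)).mul (hcoord 1 _ _ s (hD1 s hs)))).differentiableAt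
  · have h := EuclideanSpace.real_norm_sq_eq (deriv γ s)
    rw [hunit s hs, Fin.sum_univ_two] at h
    linarith
  · have h := hinc s hs
    rw [PiLp.inner_apply, Fin.sum_univ_two] at h
    simp only [RCLike.inner_apply, conj_trivial] at h
    linarith
end

section
/- Let n ≥ 2 be an integer and let κ : I → ℝ be a twice continuously differentiable, everywhere positive function on an open interval I satisfying n (κ(s) κ''(s) - 3 κ'(s)²) = (n-1) κ(s)⁴ for all s ∈ I. Then there exist a real number a and c > 0 such that s - a ∈ (-c, c) and κ(s) = √n / (√(n-1) · √(c² - (s - a)²)) for all s ∈ I. -/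
/-!
The substitution `u = κ⁻²` linearises the equation: `u' = -2κ'/κ³` and
`u'' = -2(κκ'' - 3κ'²)/κ⁴ = -2m` with `m = (n-1)/n`. Hence `u' + 2ms` is constant on the interval,
say equal to `2ma`, and then `u + m(s-a)²` is constant too. That constant is positive since `u` is,
so it can be written `mc²` with `c > 0`; this gives `κ⁻² = m(c² - (s-a)²)`.
-/

theorem stmt11_const_of_hasDerivAt_zero {I : Set ℝ} (hI : IsOpen I) (hI' : I.OrdConnected)
    {f : ℝ → ℝ} (hf : ∀ s ∈ I, HasDerivAt f 0 s) {x y : ℝ} (hx : x ∈ I) (hy : y ∈ I) :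
    f x = f y :=
  hI.is_const_of_deriv_eq_zero hI'.isPreconnected
    (fun s hs => (hf s hs).differentiableAt.differentiableWithinAt)
    (fun s hs => (hf s hs).deriv) hx hy

/-- Every twice continuously differentiable, everywhere positive solution `κ` of the
ODE `n(κκ'' - 3κ'²) = (n-1)κ⁴` (`n ≥ 2`) on an open interval `I` has the form
`κ(s) = √n/(√(n-1)·√(c² - (s-a)²))` for some real `a` and some `c > 0`. -/
theorem stmt11 (n : ℕ) (hn : 2 ≤ n) (I : Set ℝ) (hI : IsOpen I) (hI' : I.OrdConnected)
    (κ : ℝ → ℝ) (hκ : ContDiffOn ℝ 2 κ I)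
    (hpos : ∀ s ∈ I, 0 < κ s)
    (hode : ∀ s ∈ I,
      (n : ℝ) * (κ s * deriv (deriv κ) s - 3 * deriv κ s ^ 2) = ((n : ℝ) - 1) * κ s ^ 4) :
    ∃ a : ℝ, ∃ c : ℝ, 0 < c ∧ ∀ s ∈ I, s - a ∈ Set.Ioo (-c) c ∧
      κ s = Real.sqrt (n : ℝ) / (Real.sqrt ((n : ℝ) - 1) * Real.sqrt (c ^ 2 - (s - a) ^ 2)) := by
  rcases I.eq_empty_or_nonempty with rfl | ⟨s₀, hs₀⟩
  · exact ⟨0, 1, one_pos, by simp⟩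
  have hn2 : (2 : ℝ) ≤ n := by exact_mod_cast hn
  have hn0 : (0 : ℝ) < n := by linarith
  have hn1 : (0 : ℝ) < (n : ℝ) - 1 := by linarith
  have hd1 : ∀ s ∈ I, HasDerivAt κ (deriv κ s) s := fun s hs =>
    ((hκ.differentiableOn (by norm_num)).differentiableAt (hI.mem_nhds hs)).hasDerivAt
  have hd2 : ∀ s ∈ I, HasDerivAt (deriv κ) (deriv (deriv κ) s) s := fun s hs =>
    (((hκ.deriv_of_isOpen (m := 1) hI (by norm_num)).differentiableOn
      (by norm_num)).differentiableAt (hI.mem_nhds hs)).hasDerivAt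
  obtain ⟨m, hm⟩ : ∃ m : ℝ, m = ((n : ℝ) - 1) / n := ⟨_, rfl⟩
  have hm0 : 0 < m := hm ▸ div_pos hn1 hn0
  have hode' : ∀ s ∈ I, κ s * deriv (deriv κ) s - 3 * deriv κ s ^ 2 = m * κ s ^ 4 := by
    intro s hs
    have := hode s hs
    rw [hm]
    field_simp
    linarith
  -- `u' + 2ms` is constant on `I`; the centre `a` is chosen so that its value is `2ma`.
  have hv : ∀ s ∈ I, HasDerivAt (fun t => -2 * deriv κ t / κ t ^ 3 + 2 * m * t) 0 s := by
    intro s hs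
    have hk := (hpos s hs).ne'
    have h := (((hd2 s hs).const_mul (-2)).fun_div ((hd1 s hs).fun_pow 3)
      (pow_ne_zero 3 hk)).fun_add ((hasDerivAt_id' s).const_mul (2 * m))
    refine h.congr_deriv ?_
    have ho := hode' s hs
    field_simp
    norm_num
    linear_combination -κ s ^ 2 * ho
  obtain ⟨a, ha⟩ : ∃ a : ℝ, -2 * deriv κ s₀ / κ s₀ ^ 3 + 2 * m * s₀ = 2 * m * a :=
    ⟨(-2 * deriv κ s₀ / κ s₀ ^ 3 + 2 * m * s₀) / (2 * m), by field_simp⟩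
  have hw : ∀ s ∈ I, HasDerivAt (fun t => (κ t ^ 2)⁻¹ + m * (t - a) ^ 2) 0 s := by
    intro s hs
    have hk := (hpos s hs).ne'
    have h := (((hd1 s hs).fun_pow 2).fun_inv (pow_ne_zero 2 hk)).fun_add
      ((((hasDerivAt_id' s).sub_const a).fun_pow 2).const_mul m)
    refine h.congr_deriv ?_
    have hc := (stmt11_const_of_hasDerivAt_zero hI hI' hv hs hs₀).trans ha
    have hc' : -2 * deriv κ s / κ s ^ 3 = 2 * m * a - 2 * m * s := by linarith
    have e : -(((2 : ℕ) : ℝ) * κ s ^ (2 - 1) * deriv κ s) / (κ s ^ 2) ^ 2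
        = -2 * deriv κ s / κ s ^ 3 := by
      field_simp
      norm_num
      ring
    rw [e, hc']
    norm_num
    ring
  obtain ⟨K, hK⟩ : ∃ K : ℝ, K = (κ s₀ ^ 2)⁻¹ + m * (s₀ - a) ^ 2 := ⟨_, rfl⟩
  have hK0 : 0 < K := by
    have := hpos s₀ hs₀
    rw [hK]
    positivity
  refine ⟨a, √(K / m), Real.sqrt_pos.2 (div_pos hK0 hm0), fun s hs => ?_⟩
  have hk := hpos s hs
  have hc : (κ s ^ 2)⁻¹ + m * (s - a) ^ 2 = K :=
    (stmt11_const_of_hasDerivAt_zero hI hI' hw hs hs₀).trans hK.symm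
  have hd : K / m - (s - a) ^ 2 = (κ s ^ 2)⁻¹ / m := by
    rw [← hc]
    field_simp
    ring
  have hd0 : 0 < (κ s ^ 2)⁻¹ / m := by positivity
  refine ⟨abs_lt.1 (Real.lt_sqrt_of_sq_lt ?_), ?_⟩
  · rw [sq_abs]
    linarith
  · rw [Real.sq_sqrt (div_pos hK0 hm0).le, hd, ← Real.sqrt_mul hn1.le, ← Real.sqrt_div hn0.le]
    have e : (n : ℝ) / (((n : ℝ) - 1) * ((κ s ^ 2)⁻¹ / m)) = κ s ^ 2 := by
      rw [hm]
      field_simp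
    rw [e, Real.sqrt_sq hk.le]
end

section
/- Let I ⊂ ℝ be an open interval and let r : I → ℝ be a twice differentiable positive function. For s ∈ I and t ∈ ℝ set x(s,t) = (r(s) cos t, r(s) sin t, s) ∈ ℝ³ and H(s,t) = ((1 + r'(s)² - r(s) r''(s)) / (2 r(s) (1 + r'(s)²)²)) · (-cos t, -sin t, r'(s)). Then ⟨H(s,t), x(s,t)⟩ = -1 holds for all s ∈ I and all t ∈ ℝ if and only if (1 + r'(s)²)(r(s) + s r'(s) + 2 r(s) r'(s)²) + r(s)(r(s) - s r'(s)) r''(s) = 0 for all s ∈ I. -/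
/-!
Since `cos² t + sin² t = 1`, the inner product of the position vector with the direction
`(-cos t, -sin t, p)`, where `p` is the derivative of `r` at `s`, equals `s p - r`, which is
independent of `t`. Writing `q` for the second derivative, the condition is therefore
`(1 + p² - r q) (s p - r) = -2 r (1 + p²)²` after clearing the nonzero denominator, and this
expands to the differential equation at each `s`.
-/

open scoped RealInnerProductSpace

/-- For the surface of revolution `x(s,t) = (r(s)cos t, r(s)sin t, s)` in `ℝ³` with
mean curvature vector
`H(s,t) = ((1 + r'² - r r'')/(2r(1 + r'²)²)) (-cos t, -sin t, r')`,
one has `⟨H, x⟩ ≡ -1` if and only if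
`(1 + r'²)(r + s r' + 2 r r'²) + r(r - s r') r'' = 0` on `I`. -/
theorem stmt12 (I : Set ℝ) (hI : IsOpen I) (hI' : I.OrdConnected)
    (r : ℝ → ℝ) (hpos : ∀ s ∈ I, 0 < r s)
    (hdiff : ∀ s ∈ I, DifferentiableAt ℝ r s ∧ DifferentiableAt ℝ (deriv r) s)
    (x H : ℝ → ℝ → EuclideanSpace ℝ (Fin 3))
    (hx : ∀ s t : ℝ, x s t = ![r s * Real.cos t, r s * Real.sin t, s])
    (hH : ∀ s t : ℝ, H s t =
      ((1 + deriv r s ^ 2 - r s * deriv (deriv r) s) /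
          (2 * r s * (1 + deriv r s ^ 2) ^ 2)) •
        ![-Real.cos t, -Real.sin t, deriv r s]) :
    (∀ s ∈ I, ∀ t : ℝ, ⟪H s t, x s t⟫ = -1) ↔
    (∀ s ∈ I, (1 + deriv r s ^ 2) * (r s + s * deriv r s + 2 * r s * deriv r s ^ 2)
        + r s * (r s - s * deriv r s) * deriv (deriv r) s = 0) := by
  have key : ∀ s t : ℝ, ⟪H s t, x s t⟫ =
      ((1 + deriv r s ^ 2 - r s * deriv (deriv r) s) /
          (2 * r s * (1 + deriv r s ^ 2) ^ 2)) * (s * deriv r s - r s) := by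
    intro s t
    have hxy := hx s t
    have hHy := hH s t
    simp only [PiLp.inner_apply, Fin.sum_univ_three, hxy, hHy]
    simp
    linear_combination (-((1 + deriv r s ^ 2 - r s * deriv (deriv r) s) /
          (2 * r s * (1 + deriv r s ^ 2) ^ 2)) * r s) * Real.sin_sq_add_cos_sq t
  refine forall₂_congr fun s hs => ?_
  simp only [key, forall_const]
  have hr : r s ≠ 0 := (hpos s hs).ne'
  have hq : 1 + deriv r s ^ 2 ≠ 0 := by positivity
  rw [div_mul_eq_mul_div, div_eq_iff (by positivity)]
  constructor <;> intro h <;> linear_combination h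
end

section
/- Let n ≥ 2 be an integer and c > 0, and define K : (-c, c) → ℝ by K(s) = √(n/(n-1)) · arctan(s/√(c² - s²)). Define F, G : (-c, c) → ℝ by F(s) = (1-n) s cos(K(s)) + √(n(n-1)) √(c² - s²) sin(K(s)) and G(s) = (1-n) s sin(K(s)) - √(n(n-1)) √(c² - s²) cos(K(s)). Then K'(s) = √(n/(n-1)) / √(c² - s²), F'(s) = cos(K(s)), and G'(s) = sin(K(s)) for all s ∈ (-c, c). -/
/-!
With `r = √(c² - s²)`, `a = √(n/(n-1))` and `b = √(n(n-1))`, one has `r' = -s/r` and, since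
`r² + s² = c²`, `(arctan (s/r))' = 1/r`; hence `K' = a/r`. In the product-rule expansions of `F'`
and `G'`, the relation `b a = n` leaves the coefficient `(1 - n) + n = 1` on the wanted term, and
`(n - 1) a = b` cancels the others.
-/

/-- `K(s) = √(n/(n-1)) · arctan(s/√(c² - s²))`. -/
noncomputable def Kfun (n : ℕ) (c s : ℝ) : ℝ :=
  Real.sqrt ((n : ℝ) / ((n : ℝ) - 1)) * Real.arctan (s / Real.sqrt (c ^ 2 - s ^ 2))

/-- `F(s) = (1-n)s cos K(s) + √(n(n-1))√(c²-s²) sin K(s)`. -/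
noncomputable def Ffun (n : ℕ) (c s : ℝ) : ℝ :=
  (1 - (n : ℝ)) * s * Real.cos (Kfun n c s) +
    Real.sqrt ((n : ℝ) * ((n : ℝ) - 1)) * Real.sqrt (c ^ 2 - s ^ 2) * Real.sin (Kfun n c s)

/-- `G(s) = (1-n)s sin K(s) - √(n(n-1))√(c²-s²) cos K(s)`. -/
noncomputable def Gfun (n : ℕ) (c s : ℝ) : ℝ :=
  (1 - (n : ℝ)) * s * Real.sin (Kfun n c s) -
    Real.sqrt ((n : ℝ) * ((n : ℝ) - 1)) * Real.sqrt (c ^ 2 - s ^ 2) * Real.cos (Kfun n c s)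

theorem hasDerivAt_radius {c s : ℝ} (h : 0 < c ^ 2 - s ^ 2) :
    HasDerivAt (fun x : ℝ => Real.sqrt (c ^ 2 - x ^ 2)) (-s / Real.sqrt (c ^ 2 - s ^ 2)) s := by
  have h1 : HasDerivAt (fun x : ℝ => c ^ 2 - x ^ 2) (-(2 * s)) s := by
    simpa using (hasDerivAt_pow 2 s).const_sub (c ^ 2)
  convert h1.sqrt h.ne' using 1
  have := (Real.sqrt_pos.2 h).ne'
  field_simp

theorem hasDerivAt_Kfun (n : ℕ) {c s : ℝ} (h : 0 < c ^ 2 - s ^ 2) :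
    HasDerivAt (Kfun n c)
      (Real.sqrt ((n : ℝ) / ((n : ℝ) - 1)) / Real.sqrt (c ^ 2 - s ^ 2)) s := by
  have hr := Real.sqrt_pos.2 h
  have hsq := Real.sq_sqrt h.le
  have hd := (((hasDerivAt_id s).div (hasDerivAt_radius h) hr.ne').arctan).const_mul
    (Real.sqrt ((n : ℝ) / ((n : ℝ) - 1)))
  refine HasDerivAt.congr_deriv (f := Kfun n c) hd ?_
  simp only [id, Pi.div_apply]
  generalize Real.sqrt (c ^ 2 - s ^ 2) = r at *
  have : r ^ 2 + s ^ 2 ≠ 0 := by positivity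
  field_simp
  ring

/-- For `n ≥ 2` and `c > 0`, on `(-c, c)` one has
`K'(s) = √(n/(n-1))/√(c² - s²)`, `F'(s) = cos K(s)`, and `G'(s) = sin K(s)`. -/
theorem stmt15 (n : ℕ) (hn : 2 ≤ n) (c : ℝ) (hc : 0 < c) :
    ∀ s ∈ Set.Ioo (-c) c,
      HasDerivAt (Kfun n c)
        (Real.sqrt ((n : ℝ) / ((n : ℝ) - 1)) / Real.sqrt (c ^ 2 - s ^ 2)) s ∧
      HasDerivAt (Ffun n c) (Real.cos (Kfun n c s)) s ∧
      HasDerivAt (Gfun n c) (Real.sin (Kfun n c s)) s := by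
  intro s hs
  have h : 0 < c ^ 2 - s ^ 2 := by nlinarith [hs.1, hs.2]
  have hn1 : (0 : ℝ) < (n : ℝ) - 1 := by
    have : (2 : ℝ) ≤ n := by exact_mod_cast hn
    linarith
  have hr := (Real.sqrt_pos.2 h).ne'
  have hK := hasDerivAt_Kfun n h
  have hR := hasDerivAt_radius h
  -- `hb` is `b = (n - 1) a`; with `ha` it gives `b a = n`.
  have hb : Real.sqrt ((n : ℝ) * ((n : ℝ) - 1))
      = ((n : ℝ) - 1) * Real.sqrt ((n : ℝ) / ((n : ℝ) - 1)) := by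
    rw [show (n : ℝ) * ((n : ℝ) - 1) = ((n : ℝ) - 1) ^ 2 * ((n : ℝ) / ((n : ℝ) - 1)) by
      field_simp, Real.sqrt_mul (sq_nonneg _), Real.sqrt_sq hn1.le]
  have ha : ((n : ℝ) - 1) * Real.sqrt ((n : ℝ) / ((n : ℝ) - 1)) ^ 2 = n := by
    rw [Real.sq_sqrt (by positivity)]
    field_simp
  have hlin : HasDerivAt (fun x : ℝ => (1 - (n : ℝ)) * x) (1 - (n : ℝ)) s := by
    simpa using (hasDerivAt_id s).const_mul (1 - (n : ℝ))
  have hbR := hR.const_mul (Real.sqrt ((n : ℝ) * ((n : ℝ) - 1)))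
  refine ⟨hK, ?_, ?_⟩
  · refine HasDerivAt.congr_deriv (f := Ffun n c) ((hlin.mul hK.cos).add (hbR.mul hK.sin)) ?_
    rw [hb]
    generalize Real.sqrt (c ^ 2 - s ^ 2) = r at *
    generalize Real.sqrt ((n : ℝ) / ((n : ℝ) - 1)) = a at *
    field_simp
    linear_combination r * Real.cos (Kfun n c s) * ha
  · refine HasDerivAt.congr_deriv (f := Gfun n c) ((hlin.mul hK.sin).sub (hbR.mul hK.cos)) ?_
    rw [hb]
    generalize Real.sqrt (c ^ 2 - s ^ 2) = r at *
    generalize Real.sqrt ((n : ℝ) / ((n : ℝ) - 1)) = a at *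
    field_simp
    linear_combination r * Real.sin (Kfun n c s) * ha
end
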